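/- Let VPF_n^↓ denote the set of non-increasing vacillating parking functions of length n. Then |VPF_1^↓| = 1, |VPF_2^↓| = 3, |VPF_3^↓| = 6, and for every integer n ≥ 4, |VPF_n^↓| = 2·|VPF_{n-1}^↓| + |VPF_{n-3}^↓|. -/

import Mathlib

/-- One car with (1-indexed) preference `p` attempts to park on a one-way street with
spots `1,…,n` under the `k`-vacillating rule, given the set `occ` of occupied spots:
it parks in spot `p` if unoccupied; otherwise in spot `p - k` if `p - k ≥ 1` and it is
unoccupied; otherwise in spot `p + k` if `p + k ≤ n` and it is unoccupied; otherwise it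
fails to park (`none`). -/
def parkStep (n k : ℕ) (occ : Finset ℕ) (p : ℕ) : Option ℕ :=
  if p ∉ occ then some p
  else if k < p ∧ p - k ∉ occ then some (p - k)
  else if p + k ≤ n ∧ p + k ∉ occ then some (p + k)
  else none

/-- Park the cars whose preference list is given, in order, under the `k`-vacillating
rule on a street with spots `1,…,n`, starting from occupied set `occ`.  Returns the list
of spots occupied by the cars (in the order the cars arrive), or `none` if some car
fails to park. -/
def parkAssign (n k : ℕ) (occ : Finset ℕ) : List ℕ → Option (List ℕ)
  | [] => some []
  | p :: ps =>
    match parkStep n k occ p with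
    | none => none
    | some s => (parkAssign n k (insert s occ) ps).map (s :: ·)

/-- The 1-indexed preference list in `[n]^m` associated to `α : Fin m → Fin n`
(car `i+1` prefers spot `α i + 1`). -/
def prefList {m n : ℕ} (α : Fin m → Fin n) : List ℕ :=
  List.ofFn fun i => (α i : ℕ) + 1

/-- The set of `k`-vacillating parking functions of length `n`:
preference lists in `[n]^n` (encoded as `Fin n → Fin n`) for which all `n` cars park. -/
def VPFk (n k : ℕ) : Finset (Fin n → Fin n) :=
  Finset.univ.filter fun α => (parkAssign n k ∅ (prefList α)).isSome

/-- The set of vacillating parking functions of length `n` (the case `k = 1`). -/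
def VPF (n : ℕ) : Finset (Fin n → Fin n) := VPFk n 1

/-- The set of non-increasing vacillating parking functions of length `n`. -/
def VPFdown (n : ℕ) : Finset (Fin n → Fin n) :=
  (VPF n).filter fun α => ∀ i j : Fin n, i ≤ j → α j ≤ α i

open Finset

/-- Non-increasing preference lists with entries in `[1, j]` whose `a - 1` cars fill exactly the
spots `1, …, a - 1` of a street in which the spots `a, …, n` are already taken. -/
def fillings (n a j : ℕ) : Set (List ℕ) :=
  {L | L.Pairwise (· ≥ ·) ∧ (∀ p ∈ L, 1 ≤ p ∧ p ≤ j) ∧ L.length + 1 = a ∧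
    (parkAssign n 1 (Icc a n) L).isSome}

theorem parkAssign_cons_isSome {n k : ℕ} {occ : Finset ℕ} {p : ℕ} {L : List ℕ} :
    (parkAssign n k occ (p :: L)).isSome ↔
      ∃ s, parkStep n k occ p = some s ∧ (parkAssign n k (insert s occ) L).isSome := by
  rw [parkAssign]
  cases parkStep n k occ p <;> simp

theorem parkAssign_cons_isSome_of_eq {n k : ℕ} {occ occ' : Finset ℕ} {p s : ℕ} {L : List ℕ}
    (hs : parkStep n k occ p = some s) (hocc : insert s occ = occ') :
    (parkAssign n k occ (p :: L)).isSome ↔ (parkAssign n k occ' L).isSome := by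
  simp [parkAssign_cons_isSome, hs, hocc]

theorem parkStep_mem {n : ℕ} {occ : Finset ℕ} {p s j : ℕ} (hp : 1 ≤ p ∧ p ≤ j)
    (hs : parkStep n 1 occ p = some s) : s ∈ Icc 1 (j + 1) \ occ := by
  unfold parkStep at hs
  rw [mem_sdiff, mem_Icc]
  split_ifs at hs with h₁ h₂ h₃ <;> obtain rfl := Option.some.inj hs
  · exact ⟨by omega, h₂.2⟩
  · exact ⟨by omega, h₃.2⟩
  · exact ⟨by omega, h₁⟩

theorem length_le_of_parkAssign_isSome {n j : ℕ} {L : List ℕ} {occ : Finset ℕ}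
    (hL : ∀ p ∈ L, 1 ≤ p ∧ p ≤ j) (h : (parkAssign n 1 occ L).isSome) :
    L.length ≤ #(Icc 1 (j + 1) \ occ) := by
  induction L generalizing occ with
  | nil => simp
  | cons p L ih =>
    obtain ⟨s, hs, h⟩ := parkAssign_cons_isSome.1 h
    have hmem := parkStep_mem (hL p (by simp)) hs
    have hle := ih (fun q hq => hL q (by simp [hq])) h
    rw [sdiff_insert] at hle
    have := card_erase_add_one hmem
    rw [List.length_cons]
    omega

theorem forall_mem_le_of_pairwise_cons {p j : ℕ} {L : List ℕ}
    (hL : (p :: L).Pairwise (· ≥ ·)) (hpos : ∀ q ∈ p :: L, 1 ≤ q ∧ q ≤ j + 1) (hp : p ≠ j + 1) :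
    ∀ q ∈ p :: L, 1 ≤ q ∧ q ≤ j := by
  have := hpos p (by simp)
  intro q hq
  refine ⟨(hpos q hq).1, ?_⟩
  rcases List.mem_cons.1 hq with rfl | hq
  · omega
  · have := List.rel_of_pairwise_cons hL hq
    omega

theorem fillings_eq_union (n a j : ℕ) :
    fillings n a (j + 1) =
      fillings n a j ∪ List.cons (j + 1) '' {L | (j + 1) :: L ∈ fillings n a (j + 1)} := by
  ext L
  constructor
  · intro h
    obtain ⟨hs, hb, hl, hp⟩ := id h
    rcases L with _ | ⟨p, L⟩
    · exact Or.inl ⟨hs, by simp, hl, hp⟩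
    · by_cases hpj : p = j + 1
      · exact Or.inr ⟨L, by simpa [← hpj] using h, by rw [hpj]⟩
      · exact Or.inl ⟨hs, forall_mem_le_of_pairwise_cons hs hb hpj, hl, hp⟩
  · rintro (⟨hs, hb, hl, hp⟩ | ⟨L, hL, rfl⟩)
    · exact ⟨hs, fun p hp => ⟨(hb p hp).1, (hb p hp).2.trans j.le_succ⟩, hl, hp⟩
    · exact hL

theorem encard_fillings_succ (n a j : ℕ) :
    (fillings n a (j + 1)).encard =
      (fillings n a j).encard + {L | (j + 1) :: L ∈ fillings n a (j + 1)}.encard := by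
  rw [fillings_eq_union, Set.encard_union_eq, List.cons_injective.encard_image,
    ← fillings_eq_union]
  rw [Set.disjoint_left]
  rintro _ ⟨_, hb, _⟩ ⟨L, _, rfl⟩
  have := hb (j + 1) (by simp)
  omega

theorem cons_mem_fillings_of_free {n j : ℕ} (hj : j + 1 ≤ n) (L : List ℕ) :
    (j + 1) :: L ∈ fillings n (j + 2) (j + 1) ↔ L ∈ fillings n (j + 1) (j + 1) := by
  have hpark := parkAssign_cons_isSome_of_eq (n := n) (k := 1) (occ := Icc (j + 2) n)
    (occ' := Icc (j + 1) n) (p := j + 1) (s := j + 1) (L := L)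
    (by simp [parkStep]) (by ext; simp only [mem_insert, mem_Icc]; omega)
  simp only [fillings, Set.mem_ofPred_eq, hpark, List.pairwise_cons, List.length_cons,
    List.mem_cons, forall_eq_or_imp]
  constructor
  · rintro ⟨⟨_, hs⟩, ⟨_, hb⟩, hl, hp⟩
    exact ⟨hs, hb, by omega, hp⟩
  · rintro ⟨hs, hb, hl, hp⟩
    exact ⟨⟨fun q hq => (hb q hq).2, hs⟩, ⟨by omega, hb⟩, by omega, hp⟩

theorem parkAssign_cons_not_isSome {n p : ℕ} {occ : Finset ℕ} {L : List ℕ}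
    (h₀ : p ∈ occ) (h₁ : p - 1 ∈ occ) (h₂ : p + 1 ≤ n → p + 1 ∈ occ) :
    ¬ (parkAssign n 1 occ (p :: L)).isSome := by
  rw [parkAssign_cons_isSome]
  rintro ⟨s, hs, -⟩
  simp [parkStep, h₀, h₁] at hs
  exact hs.1.2 (h₂ hs.1.1)

theorem cons_mem_fillings_of_taken {n j : ℕ} (hj : j + 2 ≤ n) (L : List ℕ) :
    (j + 2) :: L ∈ fillings n (j + 2) (j + 2) ↔ L ∈ fillings n (j + 1) (j + 1) := by
  have hpark := parkAssign_cons_isSome_of_eq (n := n) (k := 1) (occ := Icc (j + 2) n)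
    (occ' := Icc (j + 1) n) (p := j + 2) (s := j + 1) (L := L)
    (by simp [parkStep, hj]) (by ext; simp only [mem_insert, mem_Icc]; omega)
  simp only [fillings, Set.mem_ofPred_eq, hpark, List.pairwise_cons, List.length_cons,
    List.mem_cons, forall_eq_or_imp]
  constructor
  · rintro ⟨⟨_, hs⟩, ⟨_, hb⟩, hl, hp⟩
    refine ⟨hs, ?_, by omega, hp⟩
    rcases L with _ | ⟨p, L⟩
    · simp
    · refine forall_mem_le_of_pairwise_cons hs hb ?_
      rintro rfl
      refine parkAssign_cons_not_isSome ?_ ?_ ?_ hp <;> simp only [mem_Icc] <;> omega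
  · rintro ⟨hs, hb, hl, hp⟩
    exact ⟨⟨fun q hq => (hb q hq).2.trans (by omega), hs⟩,
      ⟨by omega, fun q hq => ⟨(hb q hq).1, (hb q hq).2.trans (by omega)⟩⟩, by omega, hp⟩

theorem fillings_of_two_free {n j : ℕ} (hj : j + 3 ≤ n) :
    fillings n (j + 4) (j + 2) =
      (fun L => (j + 2) :: (j + 2) :: (j + 2) :: L) '' fillings n (j + 1) (j + 1) := by
  have hfirst (L : List ℕ) := parkAssign_cons_isSome_of_eq (n := n) (k := 1)
    (occ := Icc (j + 4) n) (p := j + 2) (s := j + 2) (L := L) (by simp [parkStep]) rfl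
  have hsecond (L : List ℕ) := parkAssign_cons_isSome_of_eq (n := n) (k := 1)
    (occ := insert (j + 2) (Icc (j + 4) n)) (p := j + 2) (s := j + 1) (L := L)
    (by simp [parkStep]) rfl
  have hthird (L : List ℕ) := parkAssign_cons_isSome_of_eq (n := n) (k := 1)
    (occ := insert (j + 1) (insert (j + 2) (Icc (j + 4) n))) (occ' := Icc (j + 1) n)
    (p := j + 2) (s := j + 3) (L := L)
    (by simp [parkStep, hj]) (by ext; simp only [mem_insert, mem_Icc]; omega)
  have hcard : #(Icc 1 (j + 1 + 1) \ insert (j + 2) (Icc (j + 4) n)) ≤ j + 1 := by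
    refine (card_le_card (t := Icc 1 (j + 1)) fun x => ?_).trans (by simp)
    simp only [mem_sdiff, mem_insert, mem_Icc]
    omega
  have hcard' : #(Icc 1 (j + 1 + 1) \ insert (j + 1) (insert (j + 2) (Icc (j + 4) n))) ≤ j := by
    refine (card_le_card (t := Icc 1 j) fun x => ?_).trans (by simp)
    simp only [mem_sdiff, mem_insert, mem_Icc]
    omega
  have hhead {p : ℕ} {L : List ℕ} {occ : Finset ℕ} (hs : (p :: L).Pairwise (· ≥ ·))
      (hb : ∀ q ∈ p :: L, 1 ≤ q ∧ q ≤ j + 2) (hp : (parkAssign n 1 occ (p :: L)).isSome)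
      (hl : #(Icc 1 (j + 1 + 1) \ occ) < L.length + 1) : p = j + 2 := by
    by_contra hne
    exact (length_le_of_parkAssign_isSome (forall_mem_le_of_pairwise_cons hs hb hne) hp).not_gt hl
  ext L
  constructor
  · rintro ⟨hs, hb, hl, hp⟩
    obtain _ | ⟨p, _ | ⟨q, _ | ⟨r, L⟩⟩⟩ := L <;> simp only [List.length_cons, List.length_nil] at hl
    iterate 3 omega
    obtain rfl := hhead hs hb hp ((card_le_card sdiff_subset).trans_lt (by simp; omega))
    rw [hfirst] at hp
    replace hs := hs.of_cons
    replace hb := List.forall_mem_of_forall_mem_cons hb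
    obtain rfl := hhead hs hb hp (hcard.trans_lt (by simp; omega))
    rw [hsecond] at hp
    replace hs := hs.of_cons
    replace hb := List.forall_mem_of_forall_mem_cons hb
    obtain rfl := hhead hs hb hp (hcard'.trans_lt (by omega))
    rw [hthird] at hp
    replace hs := hs.of_cons
    replace hb := List.forall_mem_of_forall_mem_cons hb
    refine ⟨L, ⟨hs, ?_, by omega, hp⟩, rfl⟩
    rcases L with _ | ⟨p, L⟩
    · simp
    · refine forall_mem_le_of_pairwise_cons hs hb ?_
      rintro rfl
      refine parkAssign_cons_not_isSome ?_ ?_ ?_ hp <;> simp only [mem_Icc] <;> omega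
  · rintro ⟨L, ⟨hs, hb, hl, hp⟩, rfl⟩
    have hb' : ∀ q ∈ L, q ≤ j + 2 := fun q hq => (hb q hq).2.trans (by omega)
    refine ⟨?_, ?_, by simp only [List.length_cons]; omega, ?_⟩
    · simpa [hs] using hb'
    · simpa using fun q hq => And.intro (hb q hq).1 (hb' q hq)
    · rwa [hfirst, hsecond, hthird]

theorem fillings_three_one {n : ℕ} (hn : 2 ≤ n) : fillings n 3 1 = {[1, 1]} := by
  ext L
  rw [Set.mem_singleton_iff]
  constructor
  · rintro ⟨_, hb, hl, _⟩
    rw [List.eq_replicate_of_mem (a := 1) (l := L) fun p hp => by have := hb p hp; omega,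
      show L.length = 2 by omega]
    rfl
  · rintro rfl
    refine ⟨by simp, by simp, rfl, ?_⟩
    simp [parkAssign, parkStep, hn]

theorem fillings_two_zero (n : ℕ) : fillings n 2 0 = ∅ := by
  refine Set.eq_empty_of_forall_notMem ?_
  rintro (_ | ⟨p, L⟩) ⟨_, hb, hl, _⟩
  · simp at hl
  · have := hb p (by simp)
    omega

theorem fillings_one (n j : ℕ) : fillings n 1 j = {[]} := by
  ext L
  rw [Set.mem_singleton_iff]
  constructor
  · rintro ⟨_, _, hl, _⟩
    exact List.length_eq_zero_iff.1 (by omega)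
  · rintro rfl
    simp [fillings, parkAssign]

/-- The number of fillings when the spot `j + 1` is the largest preference and already taken. -/
def takenCount : ℕ → ℕ
  | 0 => 1
  | 1 => 2
  | 2 => 5
  | j + 3 => 2 * takenCount (j + 2) + takenCount j

/-- The number of fillings when the spots `j` and `j + 1` are both free and `j` is the largest
preference. -/
def twoFreeCount : ℕ → ℕ
  | 0 => 0
  | 1 => 1
  | j + 2 => takenCount j

theorem takenCount_succ (j : ℕ) : takenCount (j + 1) = 2 * takenCount j + twoFreeCount j := by
  rcases j with _ | _ | j <;> simp [takenCount, twoFreeCount]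

theorem twoFreeCount_add_three (j : ℕ) :
    twoFreeCount (j + 3) = 2 * twoFreeCount (j + 2) + twoFreeCount j := by
  simp [twoFreeCount, takenCount_succ]

theorem encard_fillings_taken {n j : ℕ} (hj : j + 1 ≤ n) :
    (fillings n (j + 1) (j + 1)).encard = takenCount j ∧
      (fillings n (j + 2) j).encard = twoFreeCount j := by
  induction j using Nat.strong_induction_on with
  | _ j ih =>
    constructor
    · rcases j with _ | j
      · simp [fillings_one, takenCount]
      · obtain ⟨htaken, hfree⟩ := ih j (by omega) (by omega)
        rw [encard_fillings_succ n (j + 2) (j + 1), encard_fillings_succ n (j + 2) j]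
        simp only [cons_mem_fillings_of_taken hj, cons_mem_fillings_of_free (Nat.le_of_succ_le hj),
          Set.ofPred_mem_eq, htaken, hfree, takenCount_succ]
        push_cast
        ring
    · rcases j with _ | _ | j
      · simp [fillings_two_zero, twoFreeCount]
      · simp [fillings_three_one hj, twoFreeCount]
      · rw [fillings_of_two_free hj, Function.Injective.encard_image,
          (ih j (by omega) (by omega)).1, twoFreeCount]
        intro L L' h
        simpa using h

theorem encard_fillings_full (n : ℕ) :
    (fillings (n + 1) (n + 2) (n + 1)).encard = (takenCount n + twoFreeCount n : ℕ) := by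
  obtain ⟨htaken, hfree⟩ := encard_fillings_taken (le_refl (n + 1))
  rw [encard_fillings_succ]
  simp only [cons_mem_fillings_of_free le_rfl, Set.ofPred_mem_eq, htaken, hfree]
  push_cast
  ring

theorem prefList_injective {m n : ℕ} : Function.Injective (prefList (m := m) (n := n)) := by
  intro α β h
  have := List.ofFn_injective h
  funext i
  exact Fin.ext (Nat.succ_injective (congrFun this i))

theorem image_prefList_VPFdown (n : ℕ) :
    prefList '' (VPFdown n : Set (Fin n → Fin n)) = fillings n (n + 1) n := by
  ext L
  simp only [VPFdown, VPF, VPFk, fillings, Set.mem_image, coe_filter, Set.mem_ofPred_eq,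
    mem_filter, mem_univ, true_and, Icc_eq_empty_of_lt n.lt_succ_self]
  constructor
  · rintro ⟨α, ⟨hp, hα⟩, rfl⟩
    refine ⟨?_, ?_, by simp [prefList], hp⟩
    · simp only [prefList, List.pairwise_ofFn]
      intro i j hij
      have := hα i j hij.le
      simpa using this
    · simp only [prefList, List.mem_ofFn]
      rintro _ ⟨i, rfl⟩
      have := (α i).isLt
      omega
  · rintro ⟨hs, hb, hl, hp⟩
    obtain rfl : L.length = n := by omega
    have hpref : prefList (fun i : Fin L.length =>
        (⟨L[i] - 1, by have := hb L[i] (by simp); omega⟩ : Fin L.length)) = L := by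
      refine List.ext_getElem (by simp [prefList]) fun i h₁ h₂ => ?_
      have := hb L[i] (by simp)
      simp [prefList]
      omega
    refine ⟨_, ⟨by rwa [hpref], fun i j hij => ?_⟩, hpref⟩
    rcases hij.eq_or_lt with rfl | hij
    · exact le_rfl
    · have := List.pairwise_iff_getElem.1 hs i j i.2 j.2 hij
      simp only [Fin.mk_le_mk]
      exact Nat.sub_le_sub_right this 1

theorem card_VPFdown (n : ℕ) : #(VPFdown (n + 1)) = takenCount n + twoFreeCount n := by
  have h := encard_fillings_full n
  rw [← image_prefList_VPFdown, prefList_injective.encard_image,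
    Set.encard_coe_eq_coe_finsetCard] at h
  exact_mod_cast h

/-- `|VPF_1^↓| = 1`, `|VPF_2^↓| = 3`, `|VPF_3^↓| = 6`, and for
`n ≥ 4`, `|VPF_n^↓| = 2·|VPF_{n-1}^↓| + |VPF_{n-3}^↓|`. -/
theorem vpfdown_recurrence :
    (VPFdown 1).card = 1 ∧ (VPFdown 2).card = 3 ∧ (VPFdown 3).card = 6 ∧
      ∀ n : ℕ, 4 ≤ n →
        (VPFdown n).card = 2 * (VPFdown (n-1)).card + (VPFdown (n-3)).card := by
  refine ⟨card_VPFdown 0, card_VPFdown 1, card_VPFdown 2, fun n hn => ?_⟩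
  obtain ⟨m, rfl⟩ := Nat.exists_eq_add_of_le' hn
  rw [show m + 4 - 1 = m + 2 + 1 by omega, show m + 4 - 3 = m + 1 by omega, card_VPFdown,
    card_VPFdown, card_VPFdown, twoFreeCount_add_three, takenCount]
  ring
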